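/- arXiv:2302.06504 — 4 statements merged into one kernel-verified Lean document; each statement's English description precedes it below -/
import Mathlib

section
/- Let d be a natural number and E = EuclideanSpace ℝ (Fin d). Let p : E → ℝ be differentiable with p(x) > 0 for every x, and let U : E ≃ₗᵢ[ℝ] E be a linear isometry equivalence. Define p̃ : E → ℝ by p̃(y) = p(U.symm y). Suppose ε : ℕ → ℝ, z : ℕ → E and x : ℕ → E satisfy, for every t ≥ 1, x_t = x_{t−1} + (ε_t^2/2) • ∇(Real.log ∘ p)(x_{t−1}) + ε_t • z_t. Then the sequence x̃_t := U (x_t) satisfies, for every t ≥ 1, x̃_t = x̃_{t−1} + (ε_t^2/2) • ∇(Real.log ∘ p̃)(x̃_{t−1}) + ε_t • U (z_t). (Theorem 1, Langevin part: the discretized Langevin dynamics is equivariant under orthogonal transformations, with the noise z_t replaced by U z_t.) -/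
/-! Precomposing a function with an isometry rotates its gradient: the chain rule gives
`fderiv (f ∘ U⁻¹) (U x) = fderiv f x ∘ U⁻¹`, and since the adjoint of `U⁻¹` is `U`, this functional
is represented by `U (∇ f x)`. The Langevin update is linear in the state, score and noise, so
applying the linear map `U` to it yields the update for the transformed density. -/

open scoped RealInnerProductSpace

/-- Differentiability of `f` is not needed: `f ∘ U.symm` is differentiable at `U x` exactly when
`f` is at `x`, and otherwise both gradients are `0`. -/
theorem gradient_comp_isometryEquiv_symm {F : Type*} [NormedAddCommGroup F]
    [InnerProductSpace ℝ F] [CompleteSpace F] (f : F → ℝ) (U : F ≃ₗᵢ[ℝ] F) (x : F) :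
    gradient (f ∘ U.symm) (U x) = U (gradient f x) := by
  apply (InnerProductSpace.toDual ℝ F).injective
  ext v
  have h : fderiv ℝ (f ∘ U.symm) (U x) v = fderiv ℝ f x (U.symm v) := by
    have h' := U.symm.toContinuousLinearEquiv.comp_right_fderiv (f := f) (x := U x)
    simpa using congrArg (fun L => L v) h'
  rw [toDual_gradient, h, ← toDual_gradient, InnerProductSpace.toDual_apply_apply,
    InnerProductSpace.toDual_apply_apply, ← U.inner_map_map, U.apply_symm_apply]

theorem langevin_orthogonal_equivariance
    (d : ℕ)
    (p : EuclideanSpace ℝ (Fin d) → ℝ)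
    (hp : Differentiable ℝ p)
    (hpos : ∀ x, 0 < p x)
    (U : EuclideanSpace ℝ (Fin d) ≃ₗᵢ[ℝ] EuclideanSpace ℝ (Fin d))
    (ε : ℕ → ℝ) (z x : ℕ → EuclideanSpace ℝ (Fin d))
    (hx : ∀ t, 1 ≤ t →
      x t = x (t - 1) + (ε t ^ 2 / 2) • gradient (Real.log ∘ p) (x (t - 1)) + ε t • z t) :
    ∀ t, 1 ≤ t →
      U (x t) = U (x (t - 1))
        + (ε t ^ 2 / 2) • gradient (Real.log ∘ fun y => p (U.symm y)) (U (x (t - 1)))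
        + ε t • U (z t) := by
  intro t ht
  have h := gradient_comp_isometryEquiv_symm (Real.log ∘ p) U (x (t - 1))
  change gradient (Real.log ∘ fun y => p (U.symm y)) (U (x (t - 1))) = _ at h
  rw [h, hx t ht]
  simp only [map_add, map_smul]
end

section
/- Let d be a natural number and E = EuclideanSpace ℝ (Fin d). Let p̄ : ℕ → (E → ℝ) be a family of functions with each p̄_t differentiable and everywhere positive, and let U : E ≃ₗᵢ[ℝ] E be a linear isometry equivalence. Define p̃_t : E → ℝ by p̃_t(y) = p̄_t(U.symm y). Suppose ḡ : ℕ → ℝ, z : ℕ → E and x : ℕ → E satisfy, for every t ≥ 1, x_t = x_{t−1} + ḡ_t^2 • ∇(Real.log ∘ p̄_t)(x_{t−1}) + ḡ_t • z_t. Then the sequence x̃_t := U (x_t) satisfies, for every t ≥ 1, x̃_t = x̃_{t−1} + ḡ_t^2 • ∇(Real.log ∘ p̃_t)(x̃_{t−1}) + ḡ_t • U (z_t). (Theorem 1, reverse diffusion part: the discretized reverse diffusion is equivariant under orthogonal transformations.) -/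
/-!
The gradient is equivariant under linear isometries: by the chain rule the derivative of
`f ∘ U⁻¹` at `U x` is `D f(x) ∘ U⁻¹`, and since the adjoint of `U⁻¹` is `U`, the vector representing
this functional is `U (∇ f x)`. Applying the linear map `U` to the recursion for `x` then gives the
recursion for `U ∘ x`, with `f = log ∘ pbar t`.
-/

/-- Equivariance of the gradient under a linear isometry equivalence. Differentiability of `f` is
not needed: precomposition with an equivalence preserves non-differentiability, in which case both
gradients are `0`. -/
lemma gradient_comp_linearIsometryEquiv_symm {E : Type*} [NormedAddCommGroup E]
    [InnerProductSpace ℝ E] [CompleteSpace E] (U : E ≃ₗᵢ[ℝ] E) (f : E → ℝ) (x : E) :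
    gradient (fun y => f (U.symm y)) (U x) = U (gradient f x) := by
  refine ext_inner_right ℝ fun v => ?_
  have h : fderiv ℝ (fun y => f (U.symm y)) (U x) v = fderiv ℝ f x (U.symm v) := by
    have := U.symm.toContinuousLinearEquiv.comp_right_fderiv (f := f) (x := U x)
    simpa [Function.comp_def] using congrArg (fun L => L v) this
  rw [inner_gradient_left, h, ← inner_gradient_left, ← U.inner_map_map, U.apply_symm_apply]


theorem reverse_diffusion_orthogonal_equivariance
    (d : ℕ)
    (pbar : ℕ → (EuclideanSpace ℝ (Fin d) → ℝ))
    (hp : ∀ t, Differentiable ℝ (pbar t))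
    (hpos : ∀ t x, 0 < pbar t x)
    (U : EuclideanSpace ℝ (Fin d) ≃ₗᵢ[ℝ] EuclideanSpace ℝ (Fin d))
    (gbar : ℕ → ℝ) (z x : ℕ → EuclideanSpace ℝ (Fin d))
    (hx : ∀ t, 1 ≤ t →
      x t = x (t - 1) + (gbar t ^ 2) • gradient (Real.log ∘ pbar t) (x (t - 1)) + gbar t • z t) :
    ∀ t, 1 ≤ t →
      U (x t) = U (x (t - 1))
        + (gbar t ^ 2) • gradient (Real.log ∘ fun y => pbar t (U.symm y)) (U (x (t - 1)))
        + gbar t • U (z t) := by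
  intro t ht
  have h := gradient_comp_linearIsometryEquiv_symm U (Real.log ∘ pbar t) (x (t - 1))
  simp only [Function.comp_def] at h hx ⊢
  rw [h, hx t ht]
  simp only [map_add, map_smul]
end

section
/- Let d be a natural number, E = EuclideanSpace ℝ (Fin d), and p : E → ℝ twice continuously differentiable (ContDiff ℝ 2) with p(x) > 0 for every x. Then p satisfies the steady-state equation of the reverse diffusion, namely 2·div(y ↦ p(y) • ∇(Real.log ∘ p)(y))(x) = Δp(x) for every x ∈ E, if and only if Δp(x) = 0 for every x ∈ E. (Hence the target data distribution is in general not a steady-state solution of the reverse diffusion's Fokker–Planck equation, unlike for the Langevin dynamics; Section on preserving the final-state distribution.) -/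
/-! The score satisfies `p ∇(log p) = ∇p` wherever `p ≠ 0`, so the left-hand side of the
steady-state equation is `2 Δp`; and `2 Δp = Δp` says exactly that `Δp = 0`. -/

open scoped RealInnerProductSpace

theorem smul_gradient_log_comp {E : Type*} [NormedAddCommGroup E] [InnerProductSpace ℝ E]
    [CompleteSpace E] {p : E → ℝ} {y : E} (hp : DifferentiableAt ℝ p y) (hy : p y ≠ 0) :
    p y • gradient (Real.log ∘ p) y = gradient p y := by
  have h : fderiv ℝ (Real.log ∘ p) y = (p y)⁻¹ • fderiv ℝ p y :=
    (hp.hasFDerivAt.log hy).fderiv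
  rw [gradient, gradient, h, map_smulₛₗ, smul_smul]
  simp [hy]

theorem reverse_diffusion_steady_state_iff_harmonic
    (d : ℕ)
    (p : EuclideanSpace ℝ (Fin d) → ℝ)
    (hp : ContDiff ℝ 2 p) (hpos : ∀ x, 0 < p x) :
    (∀ x : EuclideanSpace ℝ (Fin d),
        2 * ∑ i : Fin d,
            ⟪(EuclideanSpace.single i (1 : ℝ) : EuclideanSpace ℝ (Fin d)),
              fderiv ℝ (fun y => p y • gradient (Real.log ∘ p) y) x
                (EuclideanSpace.single i (1 : ℝ))⟫
          = ∑ i : Fin d,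
              ⟪(EuclideanSpace.single i (1 : ℝ) : EuclideanSpace ℝ (Fin d)),
                fderiv ℝ (fun y => gradient p y) x (EuclideanSpace.single i (1 : ℝ))⟫)
      ↔ (∀ x : EuclideanSpace ℝ (Fin d),
          ∑ i : Fin d,
              ⟪(EuclideanSpace.single i (1 : ℝ) : EuclideanSpace ℝ (Fin d)),
                fderiv ℝ (fun y => gradient p y) x (EuclideanSpace.single i (1 : ℝ))⟫ = 0) := by
  have key : (fun y => p y • gradient (Real.log ∘ p) y) = fun y => gradient p y :=
    funext fun y => smul_gradient_log_comp
      (hp.differentiable (by norm_num) y) (hpos y).ne'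
  rw [key]
  refine forall_congr' fun x => ?_
  constructor <;> intro h <;> linarith
end

section
/- Let d be a natural number, E = EuclideanSpace ℝ (Fin d), and M : E ≃L[ℝ] E a continuous linear equivalence with adjoint M† (with respect to the Euclidean inner product). Let p̄ : ℕ → (E → ℝ) be a family of functions with each p̄_t differentiable and everywhere positive, and define q_t : E → ℝ by q_t(y) = |det M| * p̄_t(M y), where det M is the determinant of the underlying linear map of M. Suppose ḡ : ℕ → ℝ, z : ℕ → E and x : ℕ → E satisfy, for every t ≥ 1, x_t = x_{t−1} + ḡ_t^2 • M (M† (∇(Real.log ∘ p̄_t)(x_{t−1}))) + ḡ_t • M (z_t). Then the sequence y_t := M.symm (x_t) satisfies, for every t ≥ 1, y_t = y_{t−1} + ḡ_t^2 • ∇(Real.log ∘ q_t)(y_{t−1}) + ḡ_t • z_t. (Discrete core of Theorem 3: applying M⁻¹ turns the preconditioned reverse diffusion for the densities p̄_t into the standard reverse diffusion for the transformed densities q_t.) -/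
/-!
The score of the transformed density is `∇ log q_t (y) = M† ∇ log p̄_t (M y)`: the factor `|det M|`
is nonzero, so it only adds a constant to `log q_t`, and the chain rule for gradients
(`HasGradientAt.comp_clm_adjoint`) produces the adjoint. Applying the linear map `M⁻¹` to the
preconditioned recursion cancels the outer `M` in the drift and in the noise, which leaves the
standard recursion for `q_t`.
-/

/-- Chain rule for gradients: precomposition with a continuous linear map applies its adjoint. -/
theorem HasGradientAt.comp_clm_adjoint {E F : Type*}
    [NormedAddCommGroup E] [InnerProductSpace ℝ E] [CompleteSpace E]
    [NormedAddCommGroup F] [InnerProductSpace ℝ F] [CompleteSpace F]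
    (A : E →L[ℝ] F) {f : F → ℝ} {g : F} {y : E} (h : HasGradientAt f g (A y)) :
    HasGradientAt (fun y => f (A y)) (ContinuousLinearMap.adjoint A g) y := by
  rw [hasGradientAt_iff_hasFDerivAt] at h ⊢
  refine (h.comp y A.hasFDerivAt).congr_fderiv ?_
  ext v
  simp [ContinuousLinearMap.adjoint_inner_left]

theorem preconditioned_reverse_diffusion_transform
    (d : ℕ)
    (M : EuclideanSpace ℝ (Fin d) ≃L[ℝ] EuclideanSpace ℝ (Fin d))
    (pbar : ℕ → (EuclideanSpace ℝ (Fin d) → ℝ))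
    (hp : ∀ t, Differentiable ℝ (pbar t))
    (hpos : ∀ t x, 0 < pbar t x)
    (q : ℕ → (EuclideanSpace ℝ (Fin d) → ℝ))
    (hq : ∀ t y, q t y =
      |(((M : EuclideanSpace ℝ (Fin d) →L[ℝ] EuclideanSpace ℝ (Fin d)) :
          EuclideanSpace ℝ (Fin d) →ₗ[ℝ] EuclideanSpace ℝ (Fin d))).det| * pbar t (M y))
    (gbar : ℕ → ℝ) (z x : ℕ → EuclideanSpace ℝ (Fin d))
    (hx : ∀ t, 1 ≤ t →
      x t = x (t - 1)
        + (gbar t ^ 2) • (M (ContinuousLinearMap.adjoint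
            (M : EuclideanSpace ℝ (Fin d) →L[ℝ] EuclideanSpace ℝ (Fin d))
            (gradient (Real.log ∘ pbar t) (x (t - 1)))))
        + gbar t • M (z t)) :
    ∀ t, 1 ≤ t →
      M.symm (x t) = M.symm (x (t - 1))
        + (gbar t ^ 2) • gradient (Real.log ∘ q t) (M.symm (x (t - 1)))
        + gbar t • z t := by
  intro t ht
  set y := M.symm (x (t - 1)) with hy
  have hMy : M y = x (t - 1) := M.apply_symm_apply _
  have hdet : |(((M : EuclideanSpace ℝ (Fin d) →L[ℝ] EuclideanSpace ℝ (Fin d)) :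
      EuclideanSpace ℝ (Fin d) →ₗ[ℝ] EuclideanSpace ℝ (Fin d))).det| ≠ 0 :=
    abs_ne_zero.mpr M.toLinearEquiv.isUnit_det'.ne_zero
  -- `log q_t` is `log p̄_t ∘ M` up to the additive constant `log |det M|`.
  have hlog : Real.log ∘ q t = fun w => (Real.log ∘ pbar t) (M w) +
      Real.log |(((M : EuclideanSpace ℝ (Fin d) →L[ℝ] EuclideanSpace ℝ (Fin d)) :
        EuclideanSpace ℝ (Fin d) →ₗ[ℝ] EuclideanSpace ℝ (Fin d))).det| := by
    funext w
    rw [Function.comp_apply, hq, Real.log_mul hdet (hpos t _).ne', add_comm,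
      Function.comp_apply]
  have hdiff : DifferentiableAt ℝ (Real.log ∘ pbar t) (M y) :=
    ((hp t) (M y)).log (hpos t _).ne'
  have hgrad := HasGradientAt.comp_clm_adjoint
    (M : EuclideanSpace ℝ (Fin d) →L[ℝ] EuclideanSpace ℝ (Fin d)) (y := y) hdiff.hasGradientAt
  have hscore : gradient (Real.log ∘ q t) y = ContinuousLinearMap.adjoint
      (M : EuclideanSpace ℝ (Fin d) →L[ℝ] EuclideanSpace ℝ (Fin d))
      (gradient (Real.log ∘ pbar t) (x (t - 1))) := by
    rw [hlog, ← hMy]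
    exact HasGradientAt.gradient
      (hasGradientAt_iff_hasFDerivAt.mpr (hgrad.hasFDerivAt.add_const _))
  rw [hscore, hx t ht]
  simp only [map_add, map_smul, ContinuousLinearEquiv.symm_apply_apply, hy]
end
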